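/- Let ε_1, …, ε_n be independent Rademacher random variables, let p ≥ 1 and let q ∈ [1,∞] be its conjugate exponent (1/p + 1/q = 1). For t ∈ ℝ^n set X_t = Σ_{j=1}^n e^{t_j} ε_j, and let A_q be the set of random variables Y (on the same probability space, measurable with respect to ε_1,…,ε_n) with (E|Y|^q)^{1/q} ≤ 1 (interpreted as ess sup |Y| ≤ 1 when q = ∞) and E[Y ε_j] ≥ 0 for every j = 1,…,n. Then for every t ∈ ℝ^n, (E|X_t|^p)^{1/p} = max_{Y ∈ A_q} E[X_t Y]. -/

import Mathlib

open Finset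
open scoped ENNReal

/-- Expectation with respect to the uniform measure on `{-1,1}^n`, encoded via
`Fin n → Bool`. -/
noncomputable def radExp (n : ℕ) (f : (Fin n → Bool) → ℝ) : ℝ :=
  (2 ^ n : ℝ)⁻¹ * ∑ s, f s

/-- The value of the `j`-th Rademacher variable `ε_j` at the sample point `s`. -/
def radSign (n : ℕ) (s : Fin n → Bool) (j : Fin n) : ℝ :=
  if s j then 1 else -1

/-!
The upper bound is Hölder's inequality, and equality holds for
`Y = c · sgn(X) |X| ^ (p - 1)` with a normalizing constant `c ≥ 0`. The point is that this `Y` is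
admissible: it is a monotone function of `X`, and `X` is a monotone function on the cube, so `Y` is
monotone on the cube; pairing `s` with its flip in coordinate `j` then gives `E[Y ε_j] ≥ 0`.
-/

section Exponents

variable {p : ℝ} {q : ℝ≥0∞}

lemma one_le_of_holderConjugate_ofReal (hpq : (ENNReal.ofReal p).HolderConjugate q) : 1 ≤ p :=
  ENNReal.one_le_ofReal.1 (hpq.le _ q 1)

lemma eq_one_and_eq_top_or_holderConjugate_toReal (hpq : (ENNReal.ofReal p).HolderConjugate q) :
    (p = 1 ∧ q = ⊤) ∨ (q ≠ ⊤ ∧ p.HolderConjugate q.toReal) := by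
  by_cases hq : q = ⊤
  · subst hq
    exact .inl ⟨by simpa using hpq.inv_add_inv_eq_inv, rfl⟩
  · have h : (ENNReal.ofReal p).toReal.HolderConjugate q.toReal :=
      ENNReal.HolderConjugate.toReal_of_ne_top ENNReal.ofReal_ne_top hq
    rw [ENNReal.toReal_ofReal (zero_le_one.trans (one_le_of_holderConjugate_ofReal hpq))] at h
    exact .inr ⟨hq, h⟩

end Exponents

section SignedRpow

variable {r : ℝ}

/-- The odd power function `x ↦ sgn(x) |x| ^ r`. For `r = p - 1` it sends a function in `L^p` to a
multiple of its norming functional in `L^q`. -/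
noncomputable def signedRpow (r x : ℝ) : ℝ := SignType.sign x * |x| ^ r

lemma signedRpow_neg (r x : ℝ) : signedRpow r (-x) = -signedRpow r x := by
  simp [signedRpow, Left.sign_neg]

@[simp] lemma signedRpow_zero (r : ℝ) : signedRpow r 0 = 0 := by simp [signedRpow]

lemma signedRpow_of_pos {x : ℝ} (hx : 0 < x) (r : ℝ) : signedRpow r x = x ^ r := by
  simp [signedRpow, sign_pos hx, abs_of_pos hx]

lemma monotone_signedRpow (hr : 0 ≤ r) : Monotone (signedRpow r) := by
  refine monotone_of_odd_of_monotoneOn_nonneg (signedRpow_neg r) fun x hx y hy hxy => ?_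
  rcases (Set.mem_Ici.1 hx).eq_or_lt with rfl | hx
  · rcases hxy.eq_or_lt with rfl | hy
    · rfl
    · simpa [signedRpow_of_pos hy] using Real.rpow_nonneg hy.le r
  · rw [signedRpow_of_pos hx, signedRpow_of_pos (hx.trans_le hxy)]
    exact Real.rpow_le_rpow hx.le hxy hr

lemma abs_signedRpow_le (r x : ℝ) : |signedRpow r x| ≤ |x| ^ r := by
  have hpow : 0 ≤ |x| ^ r := Real.rpow_nonneg (abs_nonneg x) r
  rw [signedRpow, abs_mul, abs_of_nonneg hpow]
  refine mul_le_of_le_one_left hpow ?_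
  cases SignType.sign x <;> simp

lemma mul_signedRpow (hr : r + 1 ≠ 0) (x : ℝ) : x * signedRpow r x = |x| ^ (r + 1) := by
  rw [signedRpow, ← mul_assoc, self_mul_sign, Real.rpow_add_one' (abs_nonneg x) hr, mul_comm]

end SignedRpow

section FiniteDuality

open scoped BigOperators

lemma expect_mul_le_Lp_mul_Lq {ι : Type*} (s : Finset ι) (f g : ι → ℝ) {p q : ℝ}
    (hpq : p.HolderConjugate q) :
    𝔼 i ∈ s, f i * g i ≤
      (𝔼 i ∈ s, |f i| ^ p) ^ (1 / p) * (𝔼 i ∈ s, |g i| ^ q) ^ (1 / q) := by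
  have hcard : (0 : ℝ) ≤ #s := Nat.cast_nonneg _
  have hcard_rpow : (#s : ℝ) ^ (1 / p) * (#s : ℝ) ^ (1 / q) = #s := by
    rw [← Real.rpow_add' hcard (by simp [hpq.inv_add_inv_eq_one]), one_div, one_div,
      hpq.inv_add_inv_eq_one, Real.rpow_one]
  simp only [Finset.expect_eq_sum_div_card]
  rw [Real.div_rpow (by positivity) hcard, Real.div_rpow (by positivity) hcard, div_mul_div_comm,
    hcard_rpow]
  exact div_le_div_of_nonneg_right (Real.inner_le_Lp_mul_Lq s f g hpq) hcard

variable {Ω : Type*} [Fintype Ω] {p : ℝ} {q : ℝ≥0∞}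

lemma expect_abs_rpow_nonneg (p : ℝ) (X : Ω → ℝ) : 0 ≤ 𝔼 s, |X s| ^ p :=
  expect_nonneg fun s _ => Real.rpow_nonneg (abs_nonneg (X s)) p

/-- The closed unit ball of `L^q` for the uniform probability measure on a finite type, intended
for `1 ≤ q ≤ ∞`; the case `q = ∞` is separate because `∞.toReal = 0`. -/
def lqUnitBall (Ω : Type*) [Fintype Ω] (q : ℝ≥0∞) : Set (Ω → ℝ) :=
  {Y | if q = ⊤ then ∀ s, |Y s| ≤ 1 else (𝔼 s, |Y s| ^ q.toReal) ^ (1 / q.toReal) ≤ 1}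

lemma expect_mul_le_of_mem_lqUnitBall (hpq : (ENNReal.ofReal p).HolderConjugate q) (X : Ω → ℝ)
    {Y : Ω → ℝ} (hY : Y ∈ lqUnitBall Ω q) :
    𝔼 s, X s * Y s ≤ (𝔼 s, |X s| ^ p) ^ (1 / p) := by
  rcases eq_one_and_eq_top_or_holderConjugate_toReal hpq with ⟨rfl, rfl⟩ | ⟨hq, hpq⟩
  · simp only [lqUnitBall, if_true, Set.mem_ofPred_eq] at hY
    simp only [Real.rpow_one, div_one]
    refine expect_le_expect fun s _ => ?_
    calc X s * Y s ≤ |X s| * |Y s| := (le_abs_self _).trans_eq (abs_mul _ _)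
      _ ≤ |X s| := mul_le_of_le_one_right (abs_nonneg _) (hY s)
  · simp only [lqUnitBall, if_neg hq, Set.mem_ofPred_eq] at hY
    calc 𝔼 s, X s * Y s
        ≤ (𝔼 s, |X s| ^ p) ^ (1 / p) * (𝔼 s, |Y s| ^ q.toReal) ^ (1 / q.toReal) :=
          expect_mul_le_Lp_mul_Lq univ X Y hpq
      _ ≤ (𝔼 s, |X s| ^ p) ^ (1 / p) :=
          mul_le_of_le_one_right (Real.rpow_nonneg (expect_abs_rpow_nonneg p X) _) hY

/-- The function `‖X‖_p ^ (1 - p) · sgn(X) |X| ^ (p - 1)` that norms `X` in the duality between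
`L^p` and `L^q` on a finite type with the uniform probability measure. -/
noncomputable def lpExtremizer (p : ℝ) (X : Ω → ℝ) (s : Ω) : ℝ :=
  (𝔼 u, |X u| ^ p) ^ (1 / p - 1) * signedRpow (p - 1) (X s)

lemma monotone_lpExtremizer [Preorder Ω] (hp : 1 ≤ p) {X : Ω → ℝ} (hX : Monotone X) :
    Monotone (lpExtremizer p X) :=
  ((monotone_signedRpow (sub_nonneg.2 hp)).comp hX).const_mul
    (Real.rpow_nonneg (expect_abs_rpow_nonneg p X) _)

lemma expect_mul_lpExtremizer (hp : p ≠ 0) (X : Ω → ℝ) :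
    𝔼 s, X s * lpExtremizer p X s = (𝔼 s, |X s| ^ p) ^ (1 / p) := by
  have hp' : 1 / p - 1 + 1 ≠ 0 := by simpa using hp
  calc 𝔼 s, X s * lpExtremizer p X s
      = 𝔼 s, (𝔼 u, |X u| ^ p) ^ (1 / p - 1) * (X s * signedRpow (p - 1) (X s)) := by
        simp only [lpExtremizer, mul_left_comm]
    _ = (𝔼 s, |X s| ^ p) ^ (1 / p - 1) * 𝔼 s, |X s| ^ p := by
        simp only [mul_signedRpow (r := p - 1) (by simpa using hp), sub_add_cancel, mul_expect]
    _ = (𝔼 s, |X s| ^ p) ^ (1 / p) := by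
        rw [← Real.rpow_add_one' (expect_abs_rpow_nonneg p X) hp', sub_add_cancel]

lemma abs_lpExtremizer_le (p : ℝ) (X : Ω → ℝ) (s : Ω) :
    |lpExtremizer p X s| ≤ (𝔼 u, |X u| ^ p) ^ (1 / p - 1) * |X s| ^ (p - 1) := by
  have hc := Real.rpow_nonneg (expect_abs_rpow_nonneg p X) (1 / p - 1)
  rw [lpExtremizer, abs_mul, abs_of_nonneg hc]
  exact mul_le_mul_of_nonneg_left (abs_signedRpow_le _ _) hc

lemma expect_abs_lpExtremizer_rpow_le_one {r : ℝ} (hpr : p.HolderConjugate r) (X : Ω → ℝ) :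
    𝔼 s, |lpExtremizer p X s| ^ r ≤ 1 := by
  set M := 𝔼 s, |X s| ^ p with hM
  have hM₀ : 0 ≤ M := expect_abs_rpow_nonneg p X
  have hnorm : (1 / p - 1) * r = -1 := by
    rw [one_div, ← neg_sub, hpr.one_sub_inv, neg_mul, inv_mul_cancel₀ hpr.symm.ne_zero]
  have hpoint : ∀ s, |lpExtremizer p X s| ^ r ≤ M⁻¹ * |X s| ^ p := fun s =>
    calc |lpExtremizer p X s| ^ r
        ≤ (M ^ (1 / p - 1) * |X s| ^ (p - 1)) ^ r :=
          Real.rpow_le_rpow (abs_nonneg _) (abs_lpExtremizer_le p X s) hpr.symm.nonneg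
      _ = M⁻¹ * |X s| ^ p := by
          rw [Real.mul_rpow (by positivity) (by positivity), ← Real.rpow_mul hM₀,
            ← Real.rpow_mul (abs_nonneg _), hnorm, hpr.sub_one_mul_conj, Real.rpow_neg_one]
  calc 𝔼 s, |lpExtremizer p X s| ^ r
      ≤ 𝔼 s, M⁻¹ * |X s| ^ p := expect_le_expect fun s _ => hpoint s
    _ = M⁻¹ * M := by rw [hM, mul_expect]
    _ ≤ 1 := inv_mul_le_one

lemma lpExtremizer_mem_lqUnitBall (hpq : (ENNReal.ofReal p).HolderConjugate q) (X : Ω → ℝ) :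
    lpExtremizer p X ∈ lqUnitBall Ω q := by
  rcases eq_one_and_eq_top_or_holderConjugate_toReal hpq with ⟨rfl, rfl⟩ | ⟨hq, hpq⟩
  · simpa [lqUnitBall] using abs_lpExtremizer_le 1 X
  · simp only [lqUnitBall, if_neg hq, Set.mem_ofPred_eq]
    exact Real.rpow_le_one (expect_abs_rpow_nonneg _ _)
      (expect_abs_lpExtremizer_rpow_le_one hpq X) (by positivity)

lemma radExp_eq_expect (n : ℕ) (f : (Fin n → Bool) → ℝ) : radExp n f = 𝔼 s, f s := by
  simp [radExp, Fintype.expect_eq_sum_div_card, div_eq_inv_mul]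

end FiniteDuality

section Cube

variable {n : ℕ}

lemma monotone_radSign (j : Fin n) : Monotone fun s => radSign n s j := by
  intro s s' hs
  have hj := hs j
  revert hj
  cases h : s j <;> cases h' : s' j <;> simp [radSign, h, h']

lemma monotone_sum_mul_radSign {a : Fin n → ℝ} (ha : ∀ j, 0 ≤ a j) :
    Monotone fun s => ∑ j, a j * radSign n s j := fun _ _ hs =>
  sum_le_sum fun j _ => mul_le_mul_of_nonneg_left (monotone_radSign j hs) (ha j)

lemma radExp_mul_radSign_nonneg {F : (Fin n → Bool) → ℝ} (hF : Monotone F) (j : Fin n) :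
    0 ≤ radExp n fun s => F s * radSign n s j := by
  let flipAt : (Fin n → Bool) → (Fin n → Bool) := fun s => Function.update s j (!s j)
  have hflipAt : Function.Involutive flipAt := fun s => by simp [flipAt]
  have hpair : ∀ s, 0 ≤ F s * radSign n s j + F (flipAt s) * radSign n (flipAt s) j := by
    intro s
    cases h : s j
    · have hle : F s ≤ F (flipAt s) := hF (le_update_self_iff.2 (by simp [h]))
      simpa [radSign, flipAt, h] using hle
    · have hle : F (flipAt s) ≤ F s := hF (update_le_self_iff.2 (by simp [h]))
      simpa [radSign, flipAt, h] using hle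
  have hsum : ∑ s, F (flipAt s) * radSign n (flipAt s) j = ∑ s, F s * radSign n s j :=
    Equiv.sum_comp hflipAt.toPerm fun s => F s * radSign n s j
  have hdouble := sum_nonneg fun s (_ : s ∈ univ) => hpair s
  rw [sum_add_distrib, hsum] at hdouble
  exact mul_nonneg (by positivity) (by linarith)

theorem Lp_norm_eq_max_over_nonneg_correlations_general {p : ℝ} {q : ℝ≥0∞}
    (hpq : (ENNReal.ofReal p).HolderConjugate q) {X : (Fin n → Bool) → ℝ} (hX : Monotone X) :
    IsGreatest
      {r : ℝ | ∃ Y : (Fin n → Bool) → ℝ,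
        (if q = ⊤ then ∀ s, |Y s| ≤ 1
          else radExp n (fun s => |Y s| ^ q.toReal) ^ (1 / q.toReal) ≤ 1) ∧
        (∀ j : Fin n, 0 ≤ radExp n (fun s => Y s * radSign n s j)) ∧
        r = radExp n (fun s => X s * Y s)}
      ((radExp n (fun s => |X s| ^ p)) ^ (1 / p)) := by
  have hp : 1 ≤ p := one_le_of_holderConjugate_ofReal hpq
  have hcorr := radExp_mul_radSign_nonneg (monotone_lpExtremizer hp hX)
  simp only [radExp_eq_expect] at hcorr ⊢
  constructor
  · exact ⟨lpExtremizer p X, lpExtremizer_mem_lqUnitBall hpq X, hcorr,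
      (expect_mul_lpExtremizer (by positivity) X).symm⟩
  · rintro _ ⟨Y, hY, -, rfl⟩
    exact expect_mul_le_of_mem_lqUnitBall hpq X hY

end Cube

/-- For `p ≥ 1` with conjugate exponent `q` (so `1/p + 1/q = 1`, `q ∈ [1,∞]`),
`X_t = Σ_j e^{t_j} ε_j`, and `A_q` the set of random variables `Y` on `{-1,1}^n`
with `‖Y‖_q ≤ 1` (ess sup when `q = ∞`) and `E[Y ε_j] ≥ 0` for every `j`, we have
`(E|X_t|^p)^{1/p} = max_{Y ∈ A_q} E[X_t Y]`. -/
theorem Lp_norm_eq_max_over_nonneg_correlations (n : ℕ) (p : ℝ) (hp : 1 ≤ p)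
    (q : ℝ≥0∞) (hq : 1 / ENNReal.ofReal p + 1 / q = 1) (t : Fin n → ℝ) :
    IsGreatest
      {r : ℝ | ∃ Y : (Fin n → Bool) → ℝ,
        (if q = ⊤ then ∀ s, |Y s| ≤ 1
          else radExp n (fun s => |Y s| ^ q.toReal) ^ (1 / q.toReal) ≤ 1) ∧
        (∀ j : Fin n, 0 ≤ radExp n (fun s => Y s * radSign n s j)) ∧
        r = radExp n (fun s => (∑ j, Real.exp (t j) * radSign n s j) * Y s)}
      ((radExp n (fun s => |∑ j, Real.exp (t j) * radSign n s j| ^ p)) ^ (1 / p)) :=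
  Lp_norm_eq_max_over_nonneg_correlations_general ⟨by simpa using hq⟩
    (monotone_sum_mul_radSign fun j => (Real.exp_pos (t j)).le)
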